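/- Let α ∈ ℝ, d > 0, and E, F ∈ ℝ. Define Ψ(x,t) = t^{α/2} [ E M(−α/2, 1/2, −η²) + F η M(−α/2 + 1/2, 3/2, −η²) ] with η = x/(2√(d t)), for t > 0. Then for every x ∈ ℝ and t > 0 the spatial derivative is ∂Ψ/∂x (x,t) = (t^{(α−1)/2}/√d) [ E α η M(−α/2 + 1, 3/2, −η²) + (F/2) M(−α/2 + 1/2, 1/2, −η²) ]. -/

import Mathlib

noncomputable def poch (a : ℝ) (s : ℕ) : ℝ := ∏ i ∈ Finset.range s, (a + i)

/-- Kummer's confluent hypergeometric function `M(a,b,z)`,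
defined by the everywhere-convergent series `M(a,b,z) = Σ_{s} (a)_s z^s / ((b)_s s!)`. -/
noncomputable def kummerM (a b z : ℝ) : ℝ :=
  ∑' s : ℕ, poch a s / (poch b s * (Nat.factorial s)) * z ^ s

/-- Tricomi's confluent hypergeometric function
`U(a,b,z) = (1/Γ(a)) ∫_0^∞ e^{−z t} t^{a−1} (1+t)^{b−a−1} dt`. -/
noncomputable def tricomiU (a b z : ℝ) : ℝ :=
  (1 / Real.Gamma a) *
    ∫ t in Set.Ioi (0:ℝ), Real.exp (-z * t) * t ^ (a - 1) * (1 + t) ^ (b - a - 1)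

/-!
The ratio of consecutive coefficients of Kummer's series tends to zero, so `M(a, b, ·)` is entire
and may be differentiated term by term: `d/dz M(a, b, z) = (a / b) M(a + 1, b + 1, z)`. Comparing
coefficients also gives `(b + z d/dz) M(a, b + 1, z) = b M(a, b, z)`. Hence, for `b = 1 / 2`, the
odd solution obeys `d/dη [η M(a, 3/2, -η²)] = M(a, 1/2, -η²)`. The derivative of `Ψ` now follows
from the chain rule, since `t ^ (α / 2) ∂η/∂x = t ^ ((α - 1) / 2) / (2 √d)`.
-/

open Filter Topology

section PowerSeries

variable {𝕜 : Type*} [NontriviallyNormedField 𝕜] {c : ℕ → 𝕜}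

lemma radius_ofScalars_eq_top_of_summable (hc : ∀ z : 𝕜, Summable fun s => c s * z ^ s) :
    (FormalMultilinearSeries.ofScalars 𝕜 c).radius = ⊤ := by
  refine ENNReal.eq_top_of_forall_nnreal_le fun r => ?_
  obtain ⟨z, hz⟩ := NormedField.exists_lt_norm 𝕜 r
  have hz_le : (‖z‖₊ : ENNReal) ≤ (FormalMultilinearSeries.ofScalars 𝕜 c).radius := by
    refine FormalMultilinearSeries.le_radius_of_tendsto _ (l := 0) ?_
    simpa [FormalMultilinearSeries.ofScalars_norm] using (hc z).tendsto_atTop_zero.norm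
  exact le_trans (by exact_mod_cast hz.le) hz_le

lemma hasDerivAt_tsum_mul_pow [CompleteSpace 𝕜] (hc : ∀ z : 𝕜, Summable fun s => c s * z ^ s)
    (z : 𝕜) :
    HasDerivAt (fun y => ∑' s, c s * y ^ s) (∑' s : ℕ, (s + 1) * c (s + 1) * z ^ s) z := by
  set p := FormalMultilinearSeries.ofScalars 𝕜 c with hp
  have hz : ‖z‖ₑ < p.radius := by
    simp [hp, radius_ofScalars_eq_top_of_summable hc]
  have hsum : HasSum (fun s : ℕ => (s + 1) * c (s + 1) * z ^ s) (p.derivSeries.sum z 1) := by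
    have hderiv : HasSum (fun s => p.derivSeries s fun _ => z) (p.derivSeries.sum z) :=
      p.derivSeries.hasSum (by simpa using hz.trans_le p.radius_le_radius_derivSeries)
    convert! hderiv.mapL (ContinuousLinearMap.apply 𝕜 𝕜 (1 : 𝕜)) using 2 with s
    simp [hp, mul_comm]
  have hfun : p.sum = fun y => ∑' s, c s * y ^ s :=
    FormalMultilinearSeries.ofScalarsSum_eq_tsum (E := 𝕜) c
  rw [hsum.tsum_eq, ← hfun]
  exact (FormalMultilinearSeries.hasFDerivAt_sum hz).hasDerivAt

end PowerSeries

lemma poch_succ_right (a : ℝ) (s : ℕ) : poch a (s + 1) = poch a s * (a + s) :=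
  Finset.prod_range_succ _ s

lemma poch_succ_left (a : ℝ) (s : ℕ) : poch a (s + 1) = a * poch (a + 1) s := by
  simp [poch, Finset.prod_range_succ', add_right_comm, add_assoc, mul_comm]

lemma poch_ne_zero {b : ℝ} (hb : ∀ n : ℕ, b + n ≠ 0) (s : ℕ) : poch b s ≠ 0 :=
  Finset.prod_ne_zero_iff.2 fun i _ => hb i

/-- The coefficient `(a)_s / ((b)_s s!)` of `z ^ s` in Kummer's function `M(a, b, z)`. It is `0` as
soon as `(b)_s = 0`, so that for `b` a nonpositive integer the series is a polynomial. -/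
noncomputable def kummerCoeff (a b : ℝ) (s : ℕ) : ℝ :=
  poch a s / (poch b s * s.factorial)

lemma kummerCoeff_succ (a b : ℝ) (s : ℕ) :
    kummerCoeff a b (s + 1) = (a + s) / (b + s) * (1 / (s + 1)) * kummerCoeff a b s := by
  simp only [kummerCoeff, poch_succ_right, Nat.factorial_succ, Nat.cast_mul, Nat.cast_succ,
    div_eq_mul_inv, mul_inv]
  ring

lemma succ_mul_kummerCoeff_succ (a b : ℝ) (s : ℕ) :
    (s + 1) * kummerCoeff a b (s + 1) = a / b * kummerCoeff (a + 1) (b + 1) s := by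
  have hs : (s + 1 : ℝ) ≠ 0 := s.cast_add_one_ne_zero
  simp only [kummerCoeff, poch_succ_left, Nat.factorial_succ, Nat.cast_mul, Nat.cast_succ]
  field_simp

lemma mul_kummerCoeff {b : ℝ} (hb : ∀ n : ℕ, b + n ≠ 0) (a : ℝ) (s : ℕ) :
    b * kummerCoeff a b s = (b + s) * kummerCoeff a (b + 1) s := by
  have hpoch : poch b s * (b + s) = b * poch (b + 1) s := by
    rw [← poch_succ_right, poch_succ_left]
  have hpoch₀ : poch b s ≠ 0 := poch_ne_zero hb s
  have hpoch₁ : poch (b + 1) s ≠ 0 :=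
    right_ne_zero_of_mul (hpoch ▸ mul_ne_zero hpoch₀ (hb s))
  simp only [kummerCoeff]
  field_simp
  linear_combination -poch a s * hpoch

lemma tendsto_add_natCast_div_add_natCast (a b : ℝ) :
    Tendsto (fun s : ℕ => (a + s) / (b + s)) atTop (𝓝 1) := by
  simpa using tendsto_add_mul_div_add_mul_atTop_nhds a b 1 (one_ne_zero (α := ℝ))

lemma summable_kummerCoeff_mul_pow (a b z : ℝ) :
    Summable fun s => kummerCoeff a b s * z ^ s := by
  have hratio : Tendsto (fun s : ℕ => (a + s) / (b + s) * (1 / (s + 1)) * z) atTop (𝓝 0) := by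
    simpa using ((tendsto_add_natCast_div_add_natCast a b).mul
      tendsto_one_div_add_atTop_nhds_zero_nat).mul_const z
  refine summable_of_ratio_norm_eventually_le one_half_lt_one ?_
  filter_upwards [hratio.norm.eventually_le_const (by simp : ‖(0 : ℝ)‖ < 1 / 2)] with s hs
  calc ‖kummerCoeff a b (s + 1) * z ^ (s + 1)‖
      = ‖(a + s) / (b + s) * (1 / (s + 1)) * z‖ * ‖kummerCoeff a b s * z ^ s‖ := by
        rw [kummerCoeff_succ, ← norm_mul]
        ring_nf
    _ ≤ 1 / 2 * ‖kummerCoeff a b s * z ^ s‖ := by gcongr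

lemma hasSum_kummerM (a b z : ℝ) : HasSum (fun s => kummerCoeff a b s * z ^ s) (kummerM a b z) :=
  (summable_kummerCoeff_mul_pow a b z).hasSum

lemma hasDerivAt_kummerM (a b z : ℝ) :
    HasDerivAt (kummerM a b) (a / b * kummerM (a + 1) (b + 1) z) z := by
  refine (hasDerivAt_tsum_mul_pow (summable_kummerCoeff_mul_pow a b) z).congr_deriv ?_
  simp only [succ_mul_kummerCoeff_succ, mul_assoc, tsum_mul_left]
  rw [(hasSum_kummerM (a + 1) (b + 1) z).tsum_eq]

lemma hasSum_natCast_mul_kummerCoeff_mul_pow (a b z : ℝ) :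
    HasSum (fun s : ℕ => s * kummerCoeff a b s * z ^ s)
      (z * (a / b * kummerM (a + 1) (b + 1) z)) := by
  have hshift : HasSum (fun s : ℕ => (s + 1 : ℕ) * kummerCoeff a b (s + 1) * z ^ (s + 1))
      (z * (a / b * kummerM (a + 1) (b + 1) z)) := by
    convert! ((hasSum_kummerM (a + 1) (b + 1) z).mul_left (a / b)).mul_left z using 2 with s
    rw [← mul_assoc (a / b), ← succ_mul_kummerCoeff_succ]
    push_cast
    ring
  simpa using (hasSum_nat_add_iff (f := fun s : ℕ => s * kummerCoeff a b s * z ^ s) 1).1 hshift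

/-- The first-order operator `b + z d/dz` lowers the second parameter from `b + 1` to `b`. -/
lemma mul_kummerM_eq_add {b : ℝ} (hb : ∀ n : ℕ, b + n ≠ 0) (a z : ℝ) :
    b * kummerM a b z =
      b * kummerM a (b + 1) z + z * (a / (b + 1) * kummerM (a + 1) (b + 1 + 1) z) := by
  refine ((hasSum_kummerM a b z).mul_left b).unique ?_
  convert ((hasSum_kummerM a (b + 1) z).mul_left b).add
    (hasSum_natCast_mul_kummerCoeff_mul_pow a (b + 1) z) using 2 with s
  rw [← mul_assoc, mul_kummerCoeff hb]
  ring

lemma hasDerivAt_kummerM_neg_sq (a b η : ℝ) :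
    HasDerivAt (fun u => kummerM a b (-u ^ 2))
      (-(2 * η) * (a / b * kummerM (a + 1) (b + 1) (-η ^ 2))) η := by
  have hsq : HasDerivAt (fun u : ℝ => -u ^ 2) (-(2 * η)) η := by
    simpa using! (hasDerivAt_pow 2 η).neg
  rw [mul_comm]
  exact (hasDerivAt_kummerM a b (-η ^ 2)).comp η hsq

lemma hasDerivAt_mul_kummerM_three_halves_neg_sq (a η : ℝ) :
    HasDerivAt (fun u => u * kummerM a (3 / 2) (-u ^ 2)) (kummerM a (1 / 2) (-η ^ 2)) η := by
  have hlower := mul_kummerM_eq_add (b := 1 / 2) (fun n => by positivity) a (-η ^ 2)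
  rw [show (1 / 2 + 1 : ℝ) = 3 / 2 by norm_num] at hlower
  refine ((hasDerivAt_id' η).mul (hasDerivAt_kummerM_neg_sq a (3 / 2) η)).congr_deriv ?_
  linear_combination -2 * hlower

/-- The profile `f` of the similarity solution `Ψ(x, t) = t ^ (α / 2) * f η` of the heat equation:
`f η = E M(-α/2, 1/2, -η²) + F η M(-α/2 + 1/2, 3/2, -η²)`. -/
noncomputable def similarityProfile (α E F η : ℝ) : ℝ :=
  E * kummerM (-α / 2) (1 / 2) (-η ^ 2) + F * η * kummerM (-α / 2 + 1 / 2) (3 / 2) (-η ^ 2)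

lemma hasDerivAt_similarityProfile (α E F η : ℝ) :
    HasDerivAt (similarityProfile α E F)
      (2 * (E * α * η * kummerM (-α / 2 + 1) (3 / 2) (-η ^ 2) +
        F / 2 * kummerM (-α / 2 + 1 / 2) (1 / 2) (-η ^ 2))) η := by
  have heven := hasDerivAt_kummerM_neg_sq (-α / 2) (1 / 2) η
  rw [show (1 / 2 + 1 : ℝ) = 3 / 2 by norm_num] at heven
  have hodd := hasDerivAt_mul_kummerM_three_halves_neg_sq (-α / 2 + 1 / 2) η
  convert! (heven.const_mul E).add (hodd.const_mul F) using 1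
  · funext u
    simp only [similarityProfile, Pi.add_apply, mul_assoc]
  · ring

lemma hasDerivAt_rpow_mul_comp_div_sqrt {f : ℝ → ℝ} {f' d t x : ℝ} (α : ℝ) (ht : 0 < t)
    (hf : HasDerivAt f f' (x / (2 * √(d * t)))) :
    HasDerivAt (fun y => t ^ (α / 2) * f (y / (2 * √(d * t))))
      (t ^ ((α - 1) / 2) / √d * (f' / 2)) x := by
  have hη : HasDerivAt (fun y : ℝ => y / (2 * √(d * t))) (1 / (2 * √(d * t))) x :=
    (hasDerivAt_id' x).div_const _
  have hpow : t ^ (α / 2) = t ^ ((α - 1) / 2) * √t := by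
    rw [Real.sqrt_eq_rpow, ← Real.rpow_add ht]
    ring_nf
  have hsqrt : √t ≠ 0 := (Real.sqrt_pos.2 ht).ne'
  refine ((hf.comp x hη).const_mul (t ^ (α / 2))).congr_deriv ?_
  rw [hpow, Real.sqrt_mul' d ht.le]
  field_simp

/-- the spatial derivative of
`Ψ(x,t) = t^{α/2}[E M(−α/2,1/2,−η²) + F η M(−α/2+1/2,3/2,−η²)]`, `η = x/(2√(dt))`,
is `Ψ_x(x,t) = (t^{(α−1)/2}/√d)[E α η M(−α/2+1,3/2,−η²) + (F/2) M(−α/2+1/2,1/2,−η²)]`. -/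
theorem statement_5 (α d E F : ℝ) (hd : 0 < d)
    (Ψ : ℝ → ℝ → ℝ)
    (hΨ : ∀ x t : ℝ, Ψ x t =
      t ^ (α / 2) *
        (E * kummerM (-α / 2) (1 / 2) (-(x / (2 * Real.sqrt (d * t))) ^ 2)
          + F * (x / (2 * Real.sqrt (d * t))) *
              kummerM (-α / 2 + 1 / 2) (3 / 2) (-(x / (2 * Real.sqrt (d * t))) ^ 2))) :
    ∀ x t : ℝ, 0 < t →
      deriv (fun y => Ψ y t) x =
        t ^ ((α - 1) / 2) / Real.sqrt d *
          (E * α * (x / (2 * Real.sqrt (d * t))) *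
              kummerM (-α / 2 + 1) (3 / 2) (-(x / (2 * Real.sqrt (d * t))) ^ 2)
            + F / 2 * kummerM (-α / 2 + 1 / 2) (1 / 2) (-(x / (2 * Real.sqrt (d * t))) ^ 2)) := by
  intro x t ht
  obtain rfl : Ψ = fun x t => t ^ (α / 2) * similarityProfile α E F (x / (2 * √(d * t))) :=
    funext₂ hΨ
  have hprofile := hasDerivAt_similarityProfile α E F (x / (2 * √(d * t)))
  rw [(hasDerivAt_rpow_mul_comp_div_sqrt α ht hprofile).deriv,
    mul_div_cancel_left₀ _ two_ne_zero]
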